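/- Suppose the graph sequence {𝔾(t)} of the column stochastic matrix sequence {W(t)} is uniformly strongly connected. Let y(t+1) = W(t) y(t), y(0) = 𝟙, and S(t)_{ij} = W(t)_{ij} y_j(t) / y_i(t+1). Then there exist constants C > 0 and μ ∈ [0,1) such that for all i, j ∈ {1,…,n} and all t ≥ τ ≥ 0: | [Φ_S(t+1,τ)]_{ij} − y_j(τ)/n | ≤ C μ^{t−τ}, where Φ_S(t,τ) = S(t−1)⋯S(τ); i.e., S(t)⋯S(τ+1)S(τ) converges to (1/n) 𝟙 y(τ)ᵀ exponentially fast as t → ∞. -/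

import Mathlib

open Filter Finset

/-- `matProd M τ k = M (τ+k-1) * ⋯ * M (τ+1) * M τ` (the product of `k` factors),
i.e. the state-transition matrix `Φ_M (τ+k, τ)`. -/
def matProd {n : ℕ} (M : ℕ → Matrix (Fin n) (Fin n) ℝ) (τ : ℕ) : ℕ → Matrix (Fin n) (Fin n) ℝ
  | 0 => 1
  | k + 1 => M (τ + k) * matProd M τ k


/-!
Rescaling by `y` turns the column stochastic `W t` into a row stochastic `S t`, and a product of
`k` factors of `S` is the product of `k` factors of `W`, rescaled in the same way. Positive
diagonals let the set of vertices reached from `j` only grow, and connectivity of the union over a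
window of length `L` forces it to grow in every window until it is everything; so all products of
`(n - 1) * L + 1` factors of `W` are bounded below by a power of `β`. Since the total mass of `y` is
conserved, this bounds `y` from both sides, hence the corresponding products of `S` from below, and
multiplication by each of them contracts the spread of every column by a fixed factor. The
`y (τ + k)`-weighted mean of column `j` of the product of `S` is `y τ j` divided by the total mass,
so it is the limit.
-/

open Matrix

section RowStochastic

variable {R ι : Type*} [CommRing R] [LinearOrder R] [IsOrderedRing R] [Fintype ι] [DecidableEq ι]
  {Q : Matrix ι ι R} {x : ι → R}

theorem mulVec_le_sub_of_mem_rowStochastic (hQ : Q ∈ rowStochastic R ι) {b η : R}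
    (hx : ∀ j, x j ≤ b) {i j : ι} (hη : η ≤ Q i j) : (Q *ᵥ x) i ≤ b - η * (b - x j) := by
  have gap_nonneg (l : ι) : 0 ≤ b - x l := sub_nonneg.2 (hx l)
  have gap_eq : ∑ l, Q i l * (b - x l) = b - (Q *ᵥ x) i := by
    simp only [mul_sub, Finset.sum_sub_distrib, ← Finset.sum_mul,
      sum_row_of_mem_rowStochastic hQ, one_mul, mulVec, dotProduct]
  rw [le_sub_comm, ← gap_eq]
  calc η * (b - x j) ≤ Q i j * (b - x j) := mul_le_mul_of_nonneg_right hη (gap_nonneg j)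
    _ ≤ ∑ l, Q i l * (b - x l) :=
      Finset.single_le_sum (f := fun l ↦ Q i l * (b - x l))
        (fun l _ ↦ mul_nonneg (nonneg_of_mem_rowStochastic hQ) (gap_nonneg l)) (Finset.mem_univ j)

theorem le_mulVec_of_mem_rowStochastic (hQ : Q ∈ rowStochastic R ι) {a : R} (hx : ∀ j, a ≤ x j)
    (i : ι) : a ≤ (Q *ᵥ x) i :=
  calc a = ∑ j, Q i j * a := by
        rw [← Finset.sum_mul, sum_row_of_mem_rowStochastic hQ, one_mul]
    _ ≤ ∑ j, Q i j * x j :=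
      Finset.sum_le_sum fun j _ ↦
        mul_le_mul_of_nonneg_left (hx j) (nonneg_of_mem_rowStochastic hQ)

theorem mulVec_sub_mulVec_le_of_mem_rowStochastic (hQ : Q ∈ rowStochastic R ι) {η D : R}
    (hη : ∀ i j, η ≤ Q i j) (hx : ∀ i j, x i - x j ≤ D) (i i' : ι) :
    (Q *ᵥ x) i - (Q *ᵥ x) i' ≤ (1 - η) * D := by
  have : Nonempty ι := ⟨i⟩
  obtain ⟨jmax, hmax⟩ := Finite.exists_max x
  obtain ⟨jmin, hmin⟩ := Finite.exists_min x
  have hη_le_one : η ≤ 1 := (hη i jmin).trans (le_one_of_mem_rowStochastic hQ)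
  calc (Q *ᵥ x) i - (Q *ᵥ x) i' ≤ x jmax - η * (x jmax - x jmin) - x jmin :=
        sub_le_sub (mulVec_le_sub_of_mem_rowStochastic hQ hmax (hη i jmin))
          (le_mulVec_of_mem_rowStochastic hQ hmin i')
    _ = (1 - η) * (x jmax - x jmin) := by ring
    _ ≤ (1 - η) * D := mul_le_mul_of_nonneg_left (hx jmax jmin) (sub_nonneg.2 hη_le_one)

end RowStochastic

theorem mul_apply_mul_apply_le_mul_apply {R l m n : Type*} [Semiring R] [PartialOrder R]
    [IsOrderedRing R] [Fintype m] {A : Matrix l m R} {B : Matrix m n R} (hA : ∀ i j, 0 ≤ A i j)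
    (hB : ∀ i j, 0 ≤ B i j) (i : l) (k : m) (j : n) : A i k * B k j ≤ (A * B) i j :=
  Finset.single_le_sum (f := fun k ↦ A i k * B k j) (fun k _ ↦ mul_nonneg (hA i k) (hB k j))
    (Finset.mem_univ k)

theorem dist_centerMass_le {E ι : Type*} [SeminormedAddCommGroup E] [NormedSpace ℝ E]
    {s : Finset ι} {w : ι → ℝ} {x : ι → E} {a : E} {D : ℝ} (hw : ∀ i ∈ s, 0 ≤ w i)
    (hsum : 0 < ∑ i ∈ s, w i) (hx : ∀ i ∈ s, dist a (x i) ≤ D) : dist a (s.centerMass w x) ≤ D :=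
  Metric.mem_closedBall'.1 <|
    (convex_closedBall a D).centerMass_mem hw hsum fun i hi ↦ Metric.mem_closedBall'.2 (hx i hi)

theorem exists_pow_div_le_mul_pow {ρ : ℝ} (hρ : 0 < ρ) (hρ1 : ρ < 1) {B : ℕ} (hB : B ≠ 0) :
    ∃ C : ℝ, 0 < C ∧ ∃ μ : ℝ, 0 ≤ μ ∧ μ < 1 ∧ ∀ k : ℕ, ρ ^ (k / B) ≤ C * μ ^ k := by
  have hμ0 : 0 ≤ ρ ^ (B : ℝ)⁻¹ := Real.rpow_nonneg hρ.le _
  have hμ1 : ρ ^ (B : ℝ)⁻¹ < 1 := Real.rpow_lt_one hρ.le hρ1 (by positivity)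
  refine ⟨ρ⁻¹, inv_pos.2 hρ, ρ ^ (B : ℝ)⁻¹, hμ0, hμ1, fun k ↦ ?_⟩
  rw [le_inv_mul_iff₀ hρ]
  calc ρ * ρ ^ (k / B) = (ρ ^ (B : ℝ)⁻¹) ^ (B * (k / B + 1)) := by
        rw [pow_mul, Real.rpow_inv_natCast_pow hρ.le hB, pow_succ']
    _ ≤ (ρ ^ (B : ℝ)⁻¹) ^ k :=
      pow_le_pow_of_le_one hμ0 hμ1.le (Nat.lt_mul_div_succ k (Nat.pos_of_ne_zero hB)).le

section MatProd

variable {n : ℕ} {M : ℕ → Matrix (Fin n) (Fin n) ℝ}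

theorem matProd_add (M : ℕ → Matrix (Fin n) (Fin n) ℝ) (τ a b : ℕ) :
    matProd M τ (a + b) = matProd M (τ + a) b * matProd M τ a := by
  induction b with
  | zero => simp only [add_zero, matProd, one_mul]
  | succ b ih => rw [← add_assoc, matProd, ih, matProd, mul_assoc, add_assoc]

theorem matProd_mem {P : Submonoid (Matrix (Fin n) (Fin n) ℝ)} (hM : ∀ t, M t ∈ P) (τ k : ℕ) :
    matProd M τ k ∈ P := by
  induction k with
  | zero => exact P.one_mem
  | succ k ih => exact P.mul_mem (hM _) ih

theorem matProd_mulVec {y : ℕ → Fin n → ℝ} (hy : ∀ t, y (t + 1) = M t *ᵥ y t) (τ k : ℕ) :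
    matProd M τ k *ᵥ y τ = y (τ + k) := by
  induction k with
  | zero => exact one_mulVec _
  | succ k ih => rw [matProd, ← mulVec_mulVec, ih, ← add_assoc, hy]

theorem matProd_nonneg (hM : ∀ t i j, 0 ≤ M t i j) (τ k : ℕ) (i j : Fin n) :
    0 ≤ matProd M τ k i j := by
  induction k generalizing i with
  | zero =>
    rw [matProd, one_apply]
    positivity
  | succ k ih =>
    rw [matProd, mul_apply]
    exact Finset.sum_nonneg fun l _ ↦ mul_nonneg (hM _ i l) (ih l)

theorem matProd_succ_pos (hM : ∀ t i j, 0 ≤ M t i j) {τ k : ℕ} {i l j : Fin n}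
    (hil : 0 < M (τ + k) i l) (hlj : 0 < matProd M τ k l j) : 0 < matProd M τ (k + 1) i j :=
  (mul_pos hil hlj).trans_le
    (mul_apply_mul_apply_le_mul_apply (hM _) (matProd_nonneg hM τ k) i l j)

theorem matProd_diag_pos (hM : ∀ t i j, 0 ≤ M t i j) (hdiag : ∀ t i, 0 < M t i i) (τ k : ℕ)
    (i : Fin n) : 0 < matProd M τ k i i := by
  induction k with
  | zero => simp only [matProd, one_apply_eq, zero_lt_one]
  | succ k ih => exact matProd_succ_pos hM (hdiag _ i) ih

theorem pow_le_matProd_of_pos (hM : ∀ t i j, 0 ≤ M t i j) {β : ℝ} (hβ : 0 ≤ β)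
    (hMβ : ∀ t i j, 0 < M t i j → β ≤ M t i j) (τ k : ℕ) {i j : Fin n}
    (hpos : 0 < matProd M τ k i j) : β ^ k ≤ matProd M τ k i j := by
  induction k generalizing i with
  | zero =>
    obtain rfl : i = j := by
      by_contra hij
      simp only [matProd, one_apply_ne hij, lt_irrefl] at hpos
    simp only [matProd, pow_zero, one_apply_eq, le_refl]
  | succ k ih =>
    obtain ⟨l, -, hl⟩ : ∃ l ∈ Finset.univ, 0 < M (τ + k) i l * matProd M τ k l j :=
      (Finset.sum_pos_iff_of_nonneg fun l _ ↦
        mul_nonneg (hM _ i l) (matProd_nonneg hM τ k l j)).1 hpos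
    have hil : 0 < M (τ + k) i l := pos_of_mul_pos_left hl (matProd_nonneg hM τ k l j)
    have hlj : 0 < matProd M τ k l j := pos_of_mul_pos_right hl (hM _ i l)
    calc β ^ (k + 1) = β * β ^ k := pow_succ' β k
      _ ≤ M (τ + k) i l * matProd M τ k l j :=
        mul_le_mul (hMβ _ _ _ hil) (ih hlj) (pow_nonneg hβ k) hil.le
      _ ≤ matProd M τ (k + 1) i j :=
        mul_apply_mul_apply_le_mul_apply (hM _) (matProd_nonneg hM τ k) i l j

end MatProd

section Connectivity

variable {n : ℕ}

/-- The arc relation, from `u` to `v`, of the union of the graphs of `M t, …, M (t + L - 1)`;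
a matrix has an arc from `u` to `v` when its `(v, u)` entry is positive. -/
def UnionArc (M : ℕ → Matrix (Fin n) (Fin n) ℝ) (L t : ℕ) (u v : Fin n) : Prop :=
  ∃ k ∈ Finset.Ico t (t + L), 0 < M k v u

/-- Uniform strong connectivity of the graph sequence of `M` with window length `L`. -/
def UniformlyStronglyConnected (M : ℕ → Matrix (Fin n) (Fin n) ℝ) (L : ℕ) : Prop :=
  ∀ t i j, Relation.TransGen (UnionArc M L t) i j

/-- For nonnegative matrices, the vertices reached from `j` by a path that takes one arc of each of
the graphs of `M τ, …, M (τ + k - 1)` in turn, read off from the product of these matrices. -/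
noncomputable def reachSet (M : ℕ → Matrix (Fin n) (Fin n) ℝ) (τ : ℕ) (j : Fin n) (k : ℕ) :
    Finset (Fin n) :=
  {i | 0 < matProd M τ k i j}

variable {M : ℕ → Matrix (Fin n) (Fin n) ℝ} {τ k L : ℕ} {i j : Fin n}

theorem mem_reachSet : i ∈ reachSet M τ j k ↔ 0 < matProd M τ k i j :=
  Finset.mem_filter_univ i

theorem self_mem_reachSet (hM : ∀ t i j, 0 ≤ M t i j) (hdiag : ∀ t i, 0 < M t i i) (τ k : ℕ)
    (j : Fin n) : j ∈ reachSet M τ j k :=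
  mem_reachSet.2 (matProd_diag_pos hM hdiag τ k j)

theorem reachSet_monotone (hM : ∀ t i j, 0 ≤ M t i j) (hdiag : ∀ t i, 0 < M t i i) (τ : ℕ)
    (j : Fin n) : Monotone (reachSet M τ j) :=
  monotone_nat_of_le_succ fun _ i hi ↦
    mem_reachSet.2 (matProd_succ_pos hM (hdiag _ i) (mem_reachSet.1 hi))

theorem mem_reachSet_add_of_unionArc (hM : ∀ t i j, 0 ≤ M t i j) (hdiag : ∀ t i, 0 < M t i i)
    {u v : Fin n} (harc : UnionArc M L (τ + k) u v) (hu : u ∈ reachSet M τ j k) :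
    v ∈ reachSet M τ j (k + L) := by
  obtain ⟨s, hs, hvu⟩ := harc
  obtain ⟨hks, hsL⟩ := Finset.mem_Ico.1 hs
  obtain ⟨d, rfl⟩ := Nat.exists_eq_add_of_le hks
  have hu' : u ∈ reachSet M τ j (k + d) := reachSet_monotone hM hdiag τ j (by lia) hu
  have hv : v ∈ reachSet M τ j (k + d + 1) :=
    mem_reachSet.2 (matProd_succ_pos hM (add_assoc τ k d ▸ hvu) (mem_reachSet.1 hu'))
  exact reachSet_monotone hM hdiag τ j (by lia) hv

theorem reachSet_eq_univ_of_add_eq (hM : ∀ t i j, 0 ≤ M t i j) (hdiag : ∀ t i, 0 < M t i i)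
    (hconn : ∀ v, Relation.TransGen (UnionArc M L (τ + k)) j v)
    (hstable : reachSet M τ j (k + L) = reachSet M τ j k) : reachSet M τ j k = Finset.univ := by
  refine Finset.eq_univ_of_forall fun v ↦ ?_
  have hclosed {u w : Fin n} (harc : UnionArc M L (τ + k) u w) (hu : u ∈ reachSet M τ j k) :
      w ∈ reachSet M τ j k := hstable ▸ mem_reachSet_add_of_unionArc hM hdiag harc hu
  induction hconn v with
  | single harc => exact hclosed harc (self_mem_reachSet hM hdiag τ k j)
  | tail _ harc ih => exact hclosed harc ih

theorem min_le_card_reachSet (hM : ∀ t i j, 0 ≤ M t i j) (hdiag : ∀ t i, 0 < M t i i)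
    (hconn : UniformlyStronglyConnected M L) (τ : ℕ) (j : Fin n) (q : ℕ) :
    min (q + 1) n ≤ #(reachSet M τ j (q * L)) := by
  induction q with
  | zero =>
    have : 0 < #(reachSet M τ j (0 * L)) :=
      Finset.card_pos.2 ⟨j, self_mem_reachSet hM hdiag τ _ j⟩
    lia
  | succ q ih =>
    rw [Nat.succ_mul]
    by_cases hstable : reachSet M τ j (q * L + L) = reachSet M τ j (q * L)
    · rw [hstable, reachSet_eq_univ_of_add_eq hM hdiag (hconn _ j) hstable,
        Finset.card_fin]
      exact min_le_right _ _
    · have hmono : reachSet M τ j (q * L) ⊆ reachSet M τ j (q * L + L) :=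
        reachSet_monotone hM hdiag τ j (Nat.le_add_right _ _)
      have := Finset.card_lt_card (hmono.ssubset_of_ne (Ne.symm hstable))
      lia

theorem matProd_pos (hM : ∀ t i j, 0 ≤ M t i j) (hdiag : ∀ t i, 0 < M t i i)
    (hconn : UniformlyStronglyConnected M L) (hk : (n - 1) * L ≤ k) (τ : ℕ) (i j : Fin n) :
    0 < matProd M τ k i j := by
  have hcard : Fintype.card (Fin n) ≤ #(reachSet M τ j ((n - 1) * L)) := by
    simpa only [Nat.sub_add_cancel i.pos, min_self, Fintype.card_fin]
      using min_le_card_reachSet hM hdiag hconn τ j (n - 1)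
  have huniv : reachSet M τ j ((n - 1) * L) = Finset.univ :=
    (Finset.card_eq_iff_eq_univ _).1 ((Finset.card_le_univ _).antisymm hcard)
  exact mem_reachSet.1 (reachSet_monotone hM hdiag τ j hk (huniv ▸ Finset.mem_univ i))

end Connectivity

section RowStochasticProducts

variable {n : ℕ} {S : ℕ → Matrix (Fin n) (Fin n) ℝ} {η : ℝ} {B : ℕ}

theorem matProd_mul_apply_sub_le_pow (hS : ∀ t, S t ∈ rowStochastic ℝ (Fin n))
    (hη : ∀ τ i j, η ≤ matProd S τ B i j) (τ q : ℕ) (j i i' : Fin n) :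
    matProd S τ (q * B) i j - matProd S τ (q * B) i' j ≤ (1 - η) ^ q := by
  induction q generalizing i i' with
  | zero =>
    rw [zero_mul, matProd, pow_zero, one_apply, one_apply]
    split_ifs <;> norm_num
  | succ q ih =>
    rw [Nat.succ_mul, matProd_add, pow_succ']
    exact mulVec_sub_mulVec_le_of_mem_rowStochastic (matProd_mem hS _ B) (hη _) ih i i'

theorem matProd_apply_sub_le_pow_div (hS : ∀ t, S t ∈ rowStochastic ℝ (Fin n))
    (hη : ∀ τ i j, η ≤ matProd S τ B i j) (τ k : ℕ) (j i i' : Fin n) :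
    matProd S τ k i j - matProd S τ k i' j ≤ (1 - η) ^ (k / B) := by
  have hrem := matProd_mem hS (τ + k / B * B) (k % B)
  have hsplit : matProd S τ k = matProd S (τ + k / B * B) (k % B) * matProd S τ (k / B * B) := by
    rw [← matProd_add, Nat.div_add_mod']
  have hcontract := mulVec_sub_mulVec_le_of_mem_rowStochastic hrem
    (fun _ _ ↦ nonneg_of_mem_rowStochastic hrem)
    (matProd_mul_apply_sub_le_pow hS hη τ (k / B) j) i i'
  rw [sub_zero, one_mul] at hcontract
  rwa [hsplit]

theorem exists_matProd_apply_sub_le_mul_pow (hS : ∀ t, S t ∈ rowStochastic ℝ (Fin n))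
    (hB : B ≠ 0) (hη0 : 0 < η) (hη : ∀ τ i j, η ≤ matProd S τ B i j) :
    ∃ C : ℝ, 0 < C ∧ ∃ μ : ℝ, 0 ≤ μ ∧ μ < 1 ∧
      ∀ τ k i i' j, matProd S τ k i j - matProd S τ k i' j ≤ C * μ ^ k := by
  -- Capping `η` at `1 / 2` keeps the ratio `1 - η` of the geometric bound positive.
  have hε : 0 < min η 2⁻¹ := lt_min hη0 (by norm_num)
  have hε1 : min η 2⁻¹ < 1 := (min_le_right _ _).trans_lt (by norm_num)
  obtain ⟨C, hC, μ, hμ0, hμ1, hμ⟩ :=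
    exists_pow_div_le_mul_pow (sub_pos.2 hε1) (sub_lt_self 1 hε) hB
  exact ⟨C, hC, μ, hμ0, hμ1, fun τ k i i' j ↦
    (matProd_apply_sub_le_pow_div hS (fun τ i j ↦ (min_le_left _ _).trans (hη τ i j))
      τ k j i i').trans (hμ k)⟩

end RowStochasticProducts

section Rescaling

variable {n : ℕ} {W : ℕ → Matrix (Fin n) (Fin n) ℝ} {y : ℕ → Fin n → ℝ}

/-- The matrices `S(t) = diag(y(t+1))⁻¹ W(t) diag(y(t))` that govern the ratios of two solutions of
`x(t+1) = W(t) x(t)` when `y` is one of them. Meaningful only where `y` has no zero entry. -/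
noncomputable def rescaledSeq (W : ℕ → Matrix (Fin n) (Fin n) ℝ) (y : ℕ → Fin n → ℝ) (t : ℕ) :
    Matrix (Fin n) (Fin n) ℝ :=
  of fun i j ↦ W t i j * y t j / y (t + 1) i

theorem matProd_rescaledSeq_apply (hy : ∀ t i, y t i ≠ 0) (τ k : ℕ) (i j : Fin n) :
    matProd (rescaledSeq W y) τ k i j = matProd W τ k i j * y τ j / y (τ + k) i := by
  induction k generalizing i with
  | zero =>
    obtain rfl | hij := eq_or_ne i j
    · simp only [matProd, one_apply_eq, one_mul, add_zero, div_self (hy τ i)]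
    · simp only [matProd, one_apply_ne hij, zero_mul, zero_div]
  | succ k ih =>
    simp only [matProd, mul_apply, Finset.sum_mul, Finset.sum_div, ih]
    refine Finset.sum_congr rfl fun l _ ↦ ?_
    have := hy (τ + k) l
    simp only [rescaledSeq, of_apply, ← add_assoc]
    field_simp

theorem rescaledSeq_mem_rowStochastic (hW : ∀ t i j, 0 ≤ W t i j) (hy0 : ∀ t i, 0 < y t i)
    (hy : ∀ t, y (t + 1) = W t *ᵥ y t) (t : ℕ) : rescaledSeq W y t ∈ rowStochastic ℝ (Fin n) := by
  refine mem_rowStochastic_iff_sum.2 ⟨fun i j ↦ ?_, fun i ↦ ?_⟩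
  · exact div_nonneg (mul_nonneg (hW t i j) (hy0 t j).le) (hy0 (t + 1) i).le
  · have hrow : ∑ j, W t i j * y t j = y (t + 1) i := (congrFun (hy t) i).symm
    simp only [rescaledSeq, of_apply]
    rw [← Finset.sum_div, hrow, div_self (hy0 (t + 1) i).ne']

theorem centerMass_matProd_rescaledSeq (hW : ∀ t, W t ∈ colStochastic ℝ (Fin n))
    (hy : ∀ t i, y t i ≠ 0) (τ k : ℕ) (j : Fin n) :
    Finset.univ.centerMass (y (τ + k)) (fun i ↦ matProd (rescaledSeq W y) τ k i j) =
      y τ j / ∑ i, y (τ + k) i := by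
  simp only [Finset.centerMass, smul_eq_mul, matProd_rescaledSeq_apply hy,
    mul_div_cancel₀ _ (hy (τ + k) _)]
  rw [← Finset.sum_mul, sum_col_of_mem_colStochastic (matProd_mem hW τ k), one_mul,
    inv_mul_eq_div]

end Rescaling

section ColStochasticRecurrence

variable {n : ℕ} {W : ℕ → Matrix (Fin n) (Fin n) ℝ} {y : ℕ → Fin n → ℝ}

theorem sum_eq_sum_zero_of_mulVec_recurrence (hW : ∀ t, W t ∈ colStochastic ℝ (Fin n))
    (hy : ∀ t, y (t + 1) = W t *ᵥ y t) (t : ℕ) : ∑ i, y t i = ∑ i, y 0 i := by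
  induction t with
  | zero => rfl
  | succ t ih => rw [hy, sum_mulVec_of_mem_colStochastic (hW t), ih]

theorem matProd_apply_mul_le_of_mulVec_recurrence (hW : ∀ t i j, 0 ≤ W t i j)
    (hy : ∀ t, y (t + 1) = W t *ᵥ y t) {τ : ℕ} (hτ : ∀ i, 0 ≤ y τ i) (k : ℕ) (i j : Fin n) :
    matProd W τ k i j * y τ j ≤ y (τ + k) i := by
  rw [← matProd_mulVec hy]
  exact Finset.single_le_sum (f := fun j ↦ matProd W τ k i j * y τ j)
    (fun l _ ↦ mul_nonneg (matProd_nonneg hW τ k i l) (hτ l)) (Finset.mem_univ j)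

theorem pos_of_mulVec_recurrence (hW : ∀ t i j, 0 ≤ W t i j) (hdiag : ∀ t i, 0 < W t i i)
    (hy : ∀ t, y (t + 1) = W t *ᵥ y t) (hy0 : ∀ i, 0 < y 0 i) (t : ℕ) (i : Fin n) : 0 < y t i := by
  simpa only [zero_add] using (mul_pos (matProd_diag_pos hW hdiag 0 t i) (hy0 i)).trans_le
    (matProd_apply_mul_le_of_mulVec_recurrence hW hy (fun i ↦ (hy0 i).le) t i i)

theorem pow_mul_le_of_mulVec_recurrence (hW : ∀ t, W t ∈ colStochastic ℝ (Fin n))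
    (hdiag : ∀ t i, 0 < W t i i) {β : ℝ} (hβ : 0 ≤ β) (hWβ : ∀ t i j, 0 < W t i j → β ≤ W t i j)
    {B : ℕ} (hB : ∀ τ i j, β ^ B ≤ matProd W τ B i j) (hy : ∀ t, y (t + 1) = W t *ᵥ y t)
    {c : ℝ} (hc : 0 < c) (hy0 : ∀ i, c ≤ y 0 i) (t : ℕ) (i : Fin n) : β ^ B * c ≤ y t i := by
  have hW0 (t : ℕ) (i j : Fin n) : 0 ≤ W t i j := nonneg_of_mem_colStochastic (hW t)
  have hypos := pos_of_mulVec_recurrence hW0 hdiag hy fun i ↦ hc.trans_le (hy0 i)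
  obtain htB | hBt := le_total t B
  · have hβ1 : β ≤ 1 := (hWβ 0 i i (hdiag 0 i)).trans (le_one_of_mem_colStochastic (hW 0))
    have hdiag_le : β ^ t ≤ matProd W 0 t i i :=
      pow_le_matProd_of_pos hW0 hβ hWβ 0 t (matProd_diag_pos hW0 hdiag 0 t i)
    calc β ^ B * c ≤ matProd W 0 t i i * y 0 i :=
          mul_le_mul ((pow_le_pow_of_le_one hβ hβ1 htB).trans hdiag_le) (hy0 i) hc.le
            (matProd_nonneg hW0 0 t i i)
      _ ≤ y (0 + t) i :=
        matProd_apply_mul_le_of_mulVec_recurrence hW0 hy (fun j ↦ (hypos 0 j).le) t i i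
      _ = y t i := by rw [zero_add]
  · obtain ⟨d, rfl⟩ := Nat.exists_eq_add_of_le' hBt
    have hc_le_sum : c ≤ ∑ j, y d j := by
      rw [sum_eq_sum_zero_of_mulVec_recurrence hW hy]
      exact (hy0 i).trans
        (Finset.single_le_sum (fun j _ ↦ (hypos 0 j).le) (Finset.mem_univ i))
    calc β ^ B * c ≤ β ^ B * ∑ j, y d j := mul_le_mul_of_nonneg_left hc_le_sum (pow_nonneg hβ B)
      _ = ∑ j, β ^ B * y d j := Finset.mul_sum ..
      _ ≤ ∑ j, matProd W d B i j * y d j :=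
        Finset.sum_le_sum fun j _ ↦ mul_le_mul_of_nonneg_right (hB d i j) (hypos d j).le
      _ = y (d + B) i := by rw [← matProd_mulVec hy]; rfl

theorem exists_pos_le_matProd_rescaledSeq (hW : ∀ t, W t ∈ colStochastic ℝ (Fin n))
    (hdiag : ∀ t i, 0 < W t i i) {β : ℝ} (hβ : 0 < β) (hWβ : ∀ t i j, 0 < W t i j → β ≤ W t i j)
    {B : ℕ} (hB : ∀ τ i j, 0 < matProd W τ B i j) (hy : ∀ t, y (t + 1) = W t *ᵥ y t)
    (hy0 : ∀ i, 0 < y 0 i) : ∃ η > 0, ∀ τ i j, η ≤ matProd (rescaledSeq W y) τ B i j := by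
  cases isEmpty_or_nonempty (Fin n)
  · exact ⟨1, one_pos, fun _ i ↦ isEmptyElim i⟩
  have hW0 (t : ℕ) (i j : Fin n) : 0 ≤ W t i j := nonneg_of_mem_colStochastic (hW t)
  have hypos := pos_of_mulVec_recurrence hW0 hdiag hy hy0
  have hβB (τ : ℕ) (i j : Fin n) : β ^ B ≤ matProd W τ B i j :=
    pow_le_matProd_of_pos hW0 hβ.le hWβ τ B (hB τ i j)
  obtain ⟨i₀, hi₀⟩ := Finite.exists_min (y 0)
  have hlower := pow_mul_le_of_mulVec_recurrence hW hdiag hβ.le hWβ hβB hy (hy0 i₀) hi₀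
  have hupper (t : ℕ) (i : Fin n) : y t i ≤ ∑ l, y 0 l := by
    rw [← sum_eq_sum_zero_of_mulVec_recurrence hW hy t]
    exact Finset.single_le_sum (fun j _ ↦ (hypos t j).le) (Finset.mem_univ i)
  have hlower_pos : 0 < β ^ B * y 0 i₀ := mul_pos (pow_pos hβ B) (hy0 i₀)
  refine ⟨β ^ B * (β ^ B * y 0 i₀) / ∑ l, y 0 l,
    div_pos (mul_pos (pow_pos hβ B) hlower_pos) ((hy0 i₀).trans_le (hupper 0 i₀)), fun τ i j ↦ ?_⟩
  rw [matProd_rescaledSeq_apply fun t i ↦ (hypos t i).ne']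
  exact div_le_div₀ (mul_pos (hB τ i j) (hypos τ j)).le
    (mul_le_mul (hβB τ i j) (hlower τ j) hlower_pos.le (hB τ i j).le)
    (hypos (τ + B) i) (hupper (τ + B) i)

end ColStochasticRecurrence

theorem stmt_12_general {n : ℕ} {W : ℕ → Matrix (Fin n) (Fin n) ℝ}
    (hW : ∀ t, W t ∈ colStochastic ℝ (Fin n)) (hdiag : ∀ t i, 0 < W t i i) {β : ℝ} (hβ : 0 < β)
    (hWβ : ∀ t i j, 0 < W t i j → β ≤ W t i j) {L : ℕ} (hconn : UniformlyStronglyConnected W L)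
    {y : ℕ → Fin n → ℝ} (hy0 : ∀ i, 0 < y 0 i) (hy : ∀ t, y (t + 1) = W t *ᵥ y t) :
    ∃ C : ℝ, 0 < C ∧ ∃ μ : ℝ, 0 ≤ μ ∧ μ < 1 ∧ ∀ τ k : ℕ, ∀ i j : Fin n,
      |matProd (rescaledSeq W y) τ (k + 1) i j - y τ j / ∑ l, y 0 l| ≤ C * μ ^ k := by
  have hW0 (t : ℕ) (i j : Fin n) : 0 ≤ W t i j := nonneg_of_mem_colStochastic (hW t)
  have hypos := pos_of_mulVec_recurrence hW0 hdiag hy hy0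
  obtain ⟨η, hη0, hη⟩ := exists_pos_le_matProd_rescaledSeq hW hdiag hβ hWβ
    (matProd_pos hW0 hdiag hconn (Nat.le_succ ((n - 1) * L))) hy hy0
  obtain ⟨C, hC, μ, hμ0, hμ1, hspread⟩ := exists_matProd_apply_sub_le_mul_pow
    (rescaledSeq_mem_rowStochastic hW0 hypos hy) (Nat.succ_ne_zero _) hη0 hη
  refine ⟨C, hC, μ, hμ0, hμ1, fun τ k i j ↦ ?_⟩
  rw [← sum_eq_sum_zero_of_mulVec_recurrence hW hy (τ + (k + 1)),
    ← centerMass_matProd_rescaledSeq hW fun t i ↦ (hypos t i).ne', ← Real.dist_eq]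
  calc _ ≤ C * μ ^ (k + 1) :=
        dist_centerMass_le (fun l _ ↦ (hypos _ l).le)
          (Finset.sum_pos (fun l _ ↦ hypos _ l) ⟨i, Finset.mem_univ i⟩)
          fun l _ ↦ abs_sub_le_iff.2 ⟨hspread τ (k + 1) i l j, hspread τ (k + 1) l i j⟩
    _ ≤ C * μ ^ k :=
      mul_le_mul_of_nonneg_left (pow_le_pow_of_le_one hμ0 hμ1.le k.le_succ) hC.le

theorem stmt_12
    (n : ℕ) (hn : 0 < n)
    (W : ℕ → Matrix (Fin n) (Fin n) ℝ)
    (hWnonneg : ∀ t i j, 0 ≤ W t i j)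
    (hWcol : ∀ t j, ∑ i, W t i j = 1)
    (hWdiag : ∀ t i, 0 < W t i i)
    (β : ℝ) (hβ : 0 < β)
    (hWβ : ∀ t i j, 0 < W t i j → β ≤ W t i j)
    (L : ℕ) (hL : 0 < L)
    (hUSC : ∀ t : ℕ, ∀ i j : Fin n,
      Relation.TransGen (fun u v : Fin n => ∃ k ∈ Finset.Ico t (t + L), 0 < W k v u) i j)
    (y : ℕ → Fin n → ℝ)
    (hy0 : ∀ i, y 0 i = 1)
    (hyrec : ∀ t i, y (t + 1) i = ∑ j, W t i j * y t j)
    (S : ℕ → Matrix (Fin n) (Fin n) ℝ)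
    (hS : ∀ t i j, S t i j = W t i j * y t j / y (t + 1) i)
    :
    ∃ C : ℝ, 0 < C ∧ ∃ μ : ℝ, 0 ≤ μ ∧ μ < 1 ∧
      ∀ τ k : ℕ, ∀ i j : Fin n,
        |matProd S τ (k + 1) i j - y τ j / n| ≤ C * μ ^ k := by
  obtain rfl : S = rescaledSeq W y := funext fun t ↦ Matrix.ext (hS t)
  simpa [hy0] using stmt_12_general (fun t ↦ mem_colStochastic_iff_sum.2 ⟨hWnonneg t, hWcol t⟩)
    hWdiag hβ hWβ hUSC (by simp [hy0]) fun t ↦ funext (hyrec t)
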